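/- For every fixed integer m ≥ 2, as x → ∞, ∑_{3 ≤ n ≤ x} 1/li(n) = (1/2)·log² x − log x − log log x + E + k_2/log x + k_3/(2·log² x) + ... + k_m/((m−1)·log^{m−1} x) + O(1/log^m x), for some constant E independent of m, where the k_j satisfy k_j + 1!·k_{j−1} + ... + (j−1)!·k_1 = j·j!. -/

import Mathlib

open Filter Real

noncomputable def li (x : ℝ) : ℝ := ∫ t in (2:ℝ)..x, 1 / Real.log t

/-!
As `1 / li` decreases to `0`, the integral test gives `∑ 1 / li n = ∫ 1 / li + C + O(1 / li ⌊x⌋)`.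
Comparing derivatives gives `li x ∼ (x / log x) ∑ n! / log ^ n x`, and the recurrence for `k` says
that the formal reciprocal of `∑ n! Xⁿ` is `1 - X - ∑ k_j X ^ (j + 1)`. Hence `1 / li x` is
`log x / x` times the latter series at `X = 1 / log x`, which is integrated termwise in the variable
`log x`; the term in `k_1 = 1` produces `log log x`. For each `m` this leaves an unspecified
constant of integration, but it is the limit of the sum minus its divergent terms and so does not
depend on `m`.
-/

open Asymptotics PowerSeries Set Topology

section Comparison

theorem exists_mem_Icc_of_monotoneOn_of_antitoneOn {α β : Type*} [LinearOrder α]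
    [ConditionallyCompleteLattice β] {f g : α → β} {s : Set α} (hf : MonotoneOn f s)
    (hg : AntitoneOn g s) (hfg : ∀ x ∈ s, f x ≤ g x) :
    ∃ c, ∀ x ∈ s, c ∈ Icc (f x) (g x) := by
  have hmem := Monotone.ciSup_mem_iInter_Icc_of_antitone (f := fun x : s ↦ f x)
    (g := fun x : s ↦ g x) (fun x y hxy ↦ hf x.2 y.2 hxy) (fun x y hxy ↦ hg x.2 y.2 hxy)
    fun x ↦ hfg x x.2
  exact ⟨_, fun x hx ↦ mem_iInter.1 hmem ⟨x, hx⟩⟩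

variable {D D' u u' : ℝ → ℝ}

theorem monotoneOn_Ici_of_hasDerivAt_nonneg {a : ℝ} (hD : ∀ x, a ≤ x → HasDerivAt D (D' x) x)
    (hD' : ∀ x, a ≤ x → 0 ≤ D' x) : MonotoneOn D (Ici a) :=
  monotoneOn_of_hasDerivWithinAt_nonneg (convex_Ici a)
    (fun x hx ↦ (hD x hx).continuousAt.continuousWithinAt)
    (fun x hx ↦ (hD x (interior_subset hx)).hasDerivWithinAt)
    fun x hx ↦ hD' x (interior_subset hx)

theorem exists_monotoneOn_of_deriv_isBigO (hD : ∀ᶠ x in atTop, HasDerivAt D (D' x) x)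
    (hu : ∀ᶠ x in atTop, HasDerivAt u (u' x) x) (hu' : ∀ᶠ x in atTop, 0 ≤ u' x)
    (h : D' =O[atTop] u') :
    ∃ K > 0, ∃ a, MonotoneOn (fun x ↦ K * u x + D x) (Ici a) ∧
      MonotoneOn (fun x ↦ K * u x - D x) (Ici a) := by
  obtain ⟨K, hK, hbound⟩ := h.exists_pos
  obtain ⟨a, ha⟩ := eventually_atTop.1 (hD.and (hu.and (hu'.and hbound.bound)))
  have hDu : ∀ x, a ≤ x → |D' x| ≤ K * u' x := fun x hx ↦ by
    simpa only [norm_eq_abs, abs_of_nonneg (ha x hx).2.2.1] using (ha x hx).2.2.2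
  refine ⟨K, hK, a, monotoneOn_Ici_of_hasDerivAt_nonneg
    (fun x hx ↦ ((ha x hx).2.1.const_mul K).fun_add (ha x hx).1) fun x hx ↦ ?_,
    monotoneOn_Ici_of_hasDerivAt_nonneg
    (fun x hx ↦ ((ha x hx).2.1.const_mul K).fun_sub (ha x hx).1) fun x hx ↦ ?_⟩
  · linarith [neg_le_of_abs_le (hDu x hx)]
  · linarith [le_of_abs_le (hDu x hx)]

theorem isBigO_of_deriv_isBigO (hD : ∀ᶠ x in atTop, HasDerivAt D (D' x) x)
    (hu : ∀ᶠ x in atTop, HasDerivAt u (u' x) x) (hu' : ∀ᶠ x in atTop, 0 ≤ u' x)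
    (hlim : Tendsto u atTop atTop) (h : D' =O[atTop] u') : D =O[atTop] u := by
  obtain ⟨K, -, a, hadd, hsub⟩ := exists_monotoneOn_of_deriv_isBigO hD hu hu' h
  refine IsBigO.of_bound (K + 1) ?_
  filter_upwards [eventually_ge_atTop a, hlim.eventually_ge_atTop (|K * u a| + |D a|)] with x hx hux
  have hlower := hadd self_mem_Ici hx hx
  have hupper := hsub self_mem_Ici hx hx
  have hu0 : 0 ≤ u x := le_trans (by positivity) hux
  rw [norm_eq_abs, norm_of_nonneg hu0, abs_le]
  constructor <;>
    linarith [neg_abs_le (K * u a), neg_abs_le (D a), le_abs_self (D a)]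

-- The intervals `[D - K u, D + K u]` are nested, and `C` is one of their common points.
theorem exists_sub_isBigO_of_deriv_isBigO (hD : ∀ᶠ x in atTop, HasDerivAt D (D' x) x)
    (hu : ∀ᶠ x in atTop, HasDerivAt u (u' x) x) (hu' : ∀ᶠ x in atTop, u' x ≤ 0)
    (hu0 : ∀ᶠ x in atTop, 0 ≤ u x) (h : D' =O[atTop] u') :
    ∃ C, (fun x ↦ D x - C) =O[atTop] u := by
  obtain ⟨K, hK, a, hadd, hsub⟩ := exists_monotoneOn_of_deriv_isBigO hD
    (hu.mono fun x hx ↦ hx.fun_neg) (hu'.mono fun x hx ↦ neg_nonneg.2 hx) h.neg_right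
  obtain ⟨b, hb⟩ := eventually_atTop.1 (hu0.and (eventually_ge_atTop a))
  have hba : Ici b ⊆ Ici a := fun x hx ↦ (hb x hx).2
  obtain ⟨C, hC⟩ := exists_mem_Icc_of_monotoneOn_of_antitoneOn (hadd.mono hba)
    (hsub.neg.mono hba) fun x hx ↦ by
      have := mul_nonneg hK.le (hb x hx).1
      linarith
  refine ⟨C, IsBigO.of_bound K ?_⟩
  filter_upwards [eventually_ge_atTop b] with x hx
  obtain ⟨hlower, hupper⟩ := hC x hx
  rw [norm_eq_abs, norm_of_nonneg (hb x hx).1, abs_le]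
  constructor <;> linarith

end Comparison

section SumIntegral

variable {f : ℝ → ℝ}

theorem integral_sub_integral_mem_Icc {a b c : ℝ} (hf : AntitoneOn f (Ici c)) (hca : c ≤ a)
    (hab : a ≤ b) :
    (∫ t in c..b, f t) - ∫ t in c..a, f t ∈ Icc ((b - a) * f b) ((b - a) * f a) := by
  have hint : ∀ {p q : ℝ}, c ≤ p → p ≤ q → IntervalIntegrable f MeasureTheory.volume p q :=
    fun hp hpq ↦ (hf.mono fun t ht ↦ hp.trans (uIcc_of_le hpq ▸ ht).1).intervalIntegrable
  rw [intervalIntegral.integral_interval_sub_left (hint le_rfl (hca.trans hab)) (hint le_rfl hca)]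
  constructor
  · simpa using intervalIntegral.integral_mono_on hab intervalIntegrable_const (hint hca hab)
      fun t ht ↦ hf (hca.trans ht.1) (hca.trans hab) ht.2
  · simpa using intervalIntegral.integral_mono_on hab (hint hca hab) intervalIntegrable_const
      fun t ht ↦ hf hca (hca.trans ht.1) ht.1

variable {N : ℕ}

theorem sum_sub_integral_succ_mem_Icc (hf : AntitoneOn f (Ici N)) {n : ℕ} (hn : N ≤ n) :
    (∑ i ∈ Finset.Icc N (n + 1), f i - ∫ t in N..((n + 1 : ℕ) : ℝ), f t) -
      (∑ i ∈ Finset.Icc N n, f i - ∫ t in N..(n : ℝ), f t) ∈ Icc (f (n + 1 : ℕ) - f n) 0 := by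
  obtain ⟨hlower, hupper⟩ := integral_sub_integral_mem_Icc hf (Nat.cast_le.2 hn)
    (Nat.cast_le.2 n.le_succ)
  rw [Finset.sum_Icc_succ_top (by lia)]
  push_cast at hlower hupper ⊢
  constructor <;> linarith

theorem exists_sum_sub_integral_nat_mem_Icc (hf : AntitoneOn f (Ici N))
    (hf0 : ∀ n : ℕ, N ≤ n → 0 ≤ f n) :
    ∃ C, ∀ n : ℕ, N ≤ n →
      ∑ i ∈ Finset.Icc N n, f i - ∫ t in N..(n : ℝ), f t ∈ Icc C (C + f n) := by
  set d : ℕ → ℝ := fun n ↦ ∑ i ∈ Finset.Icc N n, f i - ∫ t in N..(n : ℝ), f t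
  have hanti : AntitoneOn d (Ici N) := antitoneOn_of_succ_le ordConnected_Ici
    fun n _ hn _ ↦ sub_nonpos.1 (sum_sub_integral_succ_mem_Icc hf hn).2
  have hmono : MonotoneOn (fun n ↦ d n - f n) (Ici N) := monotoneOn_of_le_succ ordConnected_Ici
    fun n _ hn _ ↦ by
      have := (sum_sub_integral_succ_mem_Icc hf hn).1
      change d n - f n ≤ d (n + 1) - f (n + 1 : ℕ)
      linarith
  obtain ⟨C, hC⟩ := exists_mem_Icc_of_monotoneOn_of_antitoneOn hmono hanti
    fun n hn ↦ sub_le_self _ (hf0 n hn)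
  exact ⟨C, fun n hn ↦ ⟨(hC n hn).2, sub_le_iff_le_add.1 (hC n hn).1⟩⟩

theorem exists_abs_sum_sub_integral_sub_le (hf : AntitoneOn f (Ici N))
    (hf0 : ∀ x : ℝ, N ≤ x → 0 ≤ f x) :
    ∃ C, ∀ x : ℝ, N ≤ x →
      |∑ n ∈ Finset.Icc N ⌊x⌋₊, f n - (∫ t in N..x, f t) - C| ≤ f ⌊x⌋₊ := by
  obtain ⟨C, hC⟩ := exists_sum_sub_integral_nat_mem_Icc hf fun n hn ↦ hf0 n (Nat.cast_le.2 hn)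
  refine ⟨C, fun x hx ↦ ?_⟩
  have hfloor : ⌊x⌋₊ ≤ x := Nat.floor_le (N.cast_nonneg.trans hx)
  have hN : N ≤ ⌊x⌋₊ := Nat.le_floor hx
  have hN' : (N : ℝ) ≤ ⌊x⌋₊ := Nat.cast_le.2 hN
  obtain ⟨hC_le, hle_C⟩ := hC _ hN
  obtain ⟨hlower, hupper⟩ := integral_sub_integral_mem_Icc hf hN' hfloor
  have hfrac_nonneg : 0 ≤ (x - ⌊x⌋₊) * f x := mul_nonneg (sub_nonneg.2 hfloor) (hf0 x hx)
  have hfrac_le : (x - ⌊x⌋₊) * f ⌊x⌋₊ ≤ f ⌊x⌋₊ :=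
    mul_le_of_le_one_left (hf0 _ hN') (by linarith [Nat.lt_floor_add_one x])
  rw [abs_le]
  constructor <;> linarith

end SumIntegral

section AsymptoticExpansion

variable {α 𝕜 : Type*} [NormedField 𝕜] {f z : α → 𝕜} {l : Filter α} {A : 𝕜⟦X⟧}

/-- Asymptotic expansion in the sense of Poincaré: along `l`, the function `f` agrees with every
truncation of the formal (possibly divergent) power series `A`, evaluated at `z`, up to the first
omitted power of `z`. The small parameter is a function `z`, meant to tend to `0` along `l`. -/
def HasAsymptoticExpansion (f z : α → 𝕜) (l : Filter α) (A : 𝕜⟦X⟧) : Prop :=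
  ∀ n, (fun x ↦ f x - (trunc n A).eval (z x)) =O[l] fun x ↦ z x ^ n

namespace HasAsymptoticExpansion

theorem tendsto (hf : HasAsymptoticExpansion f z l A) (hz : Tendsto z l (𝓝 0)) :
    Tendsto f l (𝓝 (constantCoeff A)) := by
  have h := (hf 1).trans_tendsto (by simpa using hz)
  simpa [trunc_one_left] using h.add_const (constantCoeff A)

end HasAsymptoticExpansion

theorem X_pow_dvd_trunc_mul_trunc_sub_one {R : Type*} [CommRing R] {A B : R⟦X⟧} (h : A * B = 1)
    (n : ℕ) : (Polynomial.X ^ n : Polynomial R) ∣ trunc n A * trunc n B - 1 := by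
  rw [Polynomial.X_pow_dvd_iff]
  intro d hd
  have hcoeff := coeff_mul_eq_coeff_trunc_mul_trunc A B hd
  rw [h, coeff_one] at hcoeff
  rw [Polynomial.coeff_sub, Polynomial.coeff_one, ← Polynomial.coeff_coe,
    Polynomial.coe_mul, ← hcoeff, sub_self]

theorem isBigO_one_eval_comp (p : Polynomial 𝕜) (hz : Tendsto z l (𝓝 0)) :
    (fun x ↦ p.eval (z x)) =O[l] fun _ ↦ (1 : 𝕜) :=
  ((p.continuous.tendsto 0).comp hz).isBigO_one 𝕜

theorem HasAsymptoticExpansion.inv (hf : HasAsymptoticExpansion f z l A)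
    (hz : Tendsto z l (𝓝 0)) (hA : constantCoeff A ≠ 0) :
    HasAsymptoticExpansion (fun x ↦ (f x)⁻¹) z l A⁻¹ := by
  intro n
  obtain ⟨R, hR⟩ := X_pow_dvd_trunc_mul_trunc_sub_one (A.mul_inv_cancel hA) n
  have hlim := hf.tendsto hz
  have hnum : (fun x ↦ 1 - f x * (trunc n A⁻¹).eval (z x)) =O[l] fun x ↦ z x ^ n := by
    have hleft := (hf n).mul (isBigO_one_eval_comp (trunc n A⁻¹) hz)
    have hright := (isBigO_refl (fun x ↦ z x ^ n) l).mul (isBigO_one_eval_comp R hz)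
    simp only [mul_one] at hleft hright
    refine (hleft.add hright).neg_left.congr_left fun x ↦ ?_
    have hRx := congrArg (Polynomial.eval (z x)) hR
    simp only [Polynomial.eval_sub, Polynomial.eval_mul, Polynomial.eval_one,
      Polynomial.eval_pow, Polynomial.eval_X] at hRx
    linear_combination hRx
  have h := ((hlim.inv₀ hA).isBigO_one 𝕜).mul hnum
  simp only [one_mul] at h
  refine h.congr' ?_ .rfl
  filter_upwards [hlim.eventually_ne hA] with x hx
  field_simp

end AsymptoticExpansion

section LogarithmicIntegral

theorem hasDerivAt_integral_of_continuousOn {E : Type*} [NormedAddCommGroup E] [NormedSpace ℝ E]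
    [CompleteSpace E] {f : ℝ → E} {s : Set ℝ} [OrdConnected s] {a x : ℝ} (hs : IsOpen s)
    (hf : ContinuousOn f s) (ha : a ∈ s) (hx : x ∈ s) :
    HasDerivAt (fun y ↦ ∫ t in a..y, f t) (f x) x :=
  intervalIntegral.integral_hasDerivAt_right
    (hf.mono (OrdConnected.uIcc_subset ‹_› ha hx)).intervalIntegrable
    (hf.stronglyMeasurableAtFilter hs x hx) (hf.continuousAt (hs.mem_nhds hx))

theorem hasDerivAt_li {x : ℝ} (hx : 1 < x) : HasDerivAt li (1 / log x) x := by
  refine hasDerivAt_integral_of_continuousOn isOpen_Ioi (fun t ht ↦ ?_)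
    (mem_Ioi.2 one_lt_two) (mem_Ioi.2 hx)
  exact (continuousAt_const.div (continuousAt_log (zero_lt_one.trans ht).ne')
    (log_pos ht).ne').continuousWithinAt

theorem strictMonoOn_li : StrictMonoOn li (Ioi 1) :=
  strictMonoOn_of_hasDerivWithinAt_pos (convex_Ioi 1)
    (fun _ ht ↦ (hasDerivAt_li ht).continuousAt.continuousWithinAt)
    (fun _ ht ↦ (hasDerivAt_li (interior_subset ht)).hasDerivWithinAt)
    fun _ ht ↦ one_div_pos.2 (log_pos (interior_subset ht))

theorem li_pos {x : ℝ} (hx : 2 < x) : 0 < li x := by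
  simpa [li] using strictMonoOn_li (mem_Ioi.2 one_lt_two) (mem_Ioi.2 (one_lt_two.trans hx)) hx

theorem antitoneOn_one_div_li : AntitoneOn (fun x ↦ 1 / li x) (Ioi 2) := fun _ hx _ hy hxy ↦
  one_div_le_one_div_of_le (li_pos hx)
    (strictMonoOn_li.monotoneOn (mem_Ioi.2 (one_lt_two.trans hx))
      (mem_Ioi.2 (one_lt_two.trans hy)) hxy)

theorem hasDerivAt_integral_one_div_li {x : ℝ} (hx : 2 < x) :
    HasDerivAt (fun y ↦ ∫ t in (3 : ℝ)..y, 1 / li t) (1 / li x) x := by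
  refine hasDerivAt_integral_of_continuousOn isOpen_Ioi (fun t ht ↦ ?_)
    (mem_Ioi.2 (by norm_num)) (mem_Ioi.2 hx)
  exact (continuousAt_const.div (hasDerivAt_li (one_lt_two.trans ht)).continuousAt
    (li_pos ht).ne').continuousWithinAt

theorem tendsto_inv_log_atTop : Tendsto (fun x ↦ (log x)⁻¹) atTop (𝓝 0) :=
  tendsto_inv_atTop_zero.comp tendsto_log_atTop

theorem hasDerivAt_inv_log_pow {x : ℝ} (hx : 1 < x) (n : ℕ) :
    HasDerivAt (fun t ↦ (log t)⁻¹ ^ n) (-(n * ((log x)⁻¹ ^ (n + 1) / x))) x := by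
  have hlog : log x ≠ 0 := (log_pos hx).ne'
  have hx0 : x ≠ 0 := by positivity
  refine (((hasDerivAt_log hx0).fun_inv hlog).fun_pow n).congr_deriv ?_
  rcases n with _ | n
  · simp
  · simp only [Nat.add_sub_cancel, inv_pow]
    field_simp
    ring

theorem hasDerivAt_mul_inv_log_pow {x : ℝ} (hx : 1 < x) (n : ℕ) :
    HasDerivAt (fun t ↦ t * (log t)⁻¹ ^ n) ((log x)⁻¹ ^ n - n * (log x)⁻¹ ^ (n + 1)) x := by
  have hx0 : x ≠ 0 := by positivity
  refine ((hasDerivAt_id' x).fun_mul (hasDerivAt_inv_log_pow hx n)).congr_deriv ?_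
  field_simp
  ring

theorem tendsto_mul_inv_log_pow_atTop (n : ℕ) :
    Tendsto (fun x ↦ x * (log x)⁻¹ ^ n) atTop atTop := by
  have hlim : Tendsto (fun x ↦ log x ^ n / x) atTop (𝓝[>] 0) := by
    refine tendsto_nhdsWithin_iff.2
      ⟨(isLittleO_pow_log_id_atTop (n := n)).tendsto_div_nhds_zero, ?_⟩
    filter_upwards [eventually_gt_atTop 1] with x hx
    have := log_pos hx
    exact mem_Ioi.2 (by positivity)
  refine hlim.inv_tendsto_nhdsGT_zero.congr fun x ↦ ?_
  simp [div_eq_mul_inv]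

theorem hasDerivAt_li_sub_sum {x : ℝ} (hx : 1 < x) (n : ℕ) :
    HasDerivAt (fun t ↦ li t - ∑ i ∈ Finset.range n, (i.factorial : ℝ) * (t * (log t)⁻¹ ^ (i + 1)))
      (n.factorial * (log x)⁻¹ ^ (n + 1)) x := by
  induction n with
  | zero => simpa using hasDerivAt_li hx
  | succ n ih =>
    simp only [Finset.sum_range_succ, ← sub_sub]
    refine (ih.fun_sub ((hasDerivAt_mul_inv_log_pow hx (n + 1)).const_mul _)).congr_deriv ?_
    rw [Nat.factorial_succ]
    push_cast
    ring

theorem eventually_half_mul_inv_log_pow_le (n : ℕ) :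
    ∀ᶠ x in atTop, 1 / 2 * (log x)⁻¹ ^ n ≤ (log x)⁻¹ ^ n - n * (log x)⁻¹ ^ (n + 1) := by
  have hlim : Tendsto (fun x ↦ n * (log x)⁻¹) atTop (𝓝 0) := by
    simpa using tendsto_inv_log_atTop.const_mul (n : ℝ)
  filter_upwards [eventually_gt_atTop 1, hlim.eventually_le_const (half_pos one_pos)] with x hx hnx
  have hpow : 0 ≤ (log x)⁻¹ ^ n := pow_nonneg (inv_nonneg.2 (log_pos hx).le) n
  calc 1 / 2 * (log x)⁻¹ ^ n ≤ (1 - n * (log x)⁻¹) * (log x)⁻¹ ^ n := by gcongr; linarith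
    _ = (log x)⁻¹ ^ n - n * (log x)⁻¹ ^ (n + 1) := by ring

theorem li_sub_sum_isBigO (n : ℕ) :
    (fun x ↦ li x - ∑ i ∈ Finset.range n, (i.factorial : ℝ) * (x * (log x)⁻¹ ^ (i + 1)))
      =O[atTop] fun x ↦ x * (log x)⁻¹ ^ (n + 1) := by
  have hpow : ∀ᶠ x in atTop, 0 ≤ (log x)⁻¹ ^ (n + 1) :=
    (eventually_gt_atTop 1).mono fun x hx ↦ pow_nonneg (inv_nonneg.2 (log_pos hx).le) _
  have hlower := eventually_half_mul_inv_log_pow_le (n + 1)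
  have hderiv_nonneg : ∀ᶠ x in atTop,
      0 ≤ (log x)⁻¹ ^ (n + 1) - (n + 1 : ℕ) * (log x)⁻¹ ^ (n + 1 + 1) := by
    filter_upwards [hpow, hlower] with x hx hle
    linarith
  refine isBigO_of_deriv_isBigO
    ((eventually_gt_atTop 1).mono fun x hx ↦ hasDerivAt_li_sub_sum hx n)
    ((eventually_gt_atTop 1).mono fun x hx ↦ hasDerivAt_mul_inv_log_pow hx (n + 1))
    hderiv_nonneg (tendsto_mul_inv_log_pow_atTop (n + 1)) (IsBigO.const_mul_left ?_ _)
  refine IsBigO.of_bound 2 ?_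
  filter_upwards [hpow, hlower, hderiv_nonneg] with x hx hle hnonneg
  rw [norm_of_nonneg hx, norm_of_nonneg hnonneg]
  linarith

/-- The divergent series `∑ n! Xⁿ`, the asymptotic expansion of `li x / (x / log x)` in powers of
`1 / log x`. -/
noncomputable def factorialSeries : ℝ⟦X⟧ := PowerSeries.mk fun n ↦ (n.factorial : ℝ)

theorem eval_trunc {R : Type*} [CommSemiring R] (A : R⟦X⟧) (n : ℕ) (y : R) :
    (trunc n A).eval y = ∑ i ∈ Finset.range n, coeff i A * y ^ i :=
  eval₂_trunc_eq_sum_range y (RingHom.id R) n A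

theorem hasAsymptoticExpansion_li :
    HasAsymptoticExpansion (fun x ↦ li x * (log x / x)) (fun x ↦ (log x)⁻¹) atTop
      factorialSeries := by
  intro n
  refine ((li_sub_sum_isBigO n).mul (isBigO_refl (fun x ↦ log x / x) atTop)).congr' ?_ ?_
  all_goals
    filter_upwards [eventually_gt_atTop 1] with x hx
    have hlog : log x ≠ 0 := (log_pos hx).ne'
  · rw [eval_trunc, sub_mul, Finset.sum_mul]
    congr 1
    refine Finset.sum_congr rfl fun i _ ↦ ?_
    simp only [factorialSeries, coeff_mk, pow_succ]
    field_simp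
  · rw [pow_succ]
    field_simp

theorem one_div_li_sub_isBigO (n : ℕ) :
    (fun x ↦ 1 / li x - log x / x * (trunc n factorialSeries⁻¹).eval (log x)⁻¹)
      =O[atTop] fun x ↦ log x / x * (log x)⁻¹ ^ n := by
  have hinv := hasAsymptoticExpansion_li.inv tendsto_inv_log_atTop (by simp [factorialSeries])
  refine ((isBigO_refl (fun x ↦ log x / x) atTop).mul (hinv n)).congr' ?_ .rfl
  filter_upwards [eventually_gt_atTop 2] with x hx
  have hli := (li_pos hx).ne'
  have hlog := (log_pos (one_lt_two.trans hx)).ne'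
  field_simp

theorem one_div_li_isBigO (n : ℕ) : (fun x ↦ 1 / li x) =O[atTop] fun x ↦ (log x)⁻¹ ^ n := by
  have hli : (fun x ↦ 1 / li x) =O[atTop] fun x ↦ log x / x := by
    simpa using one_div_li_sub_isBigO 0
  refine hli.trans ?_
  refine ((isLittleO_pow_log_id_atTop (n := n + 1)).isBigO.mul
    (isBigO_refl (fun x ↦ (log x)⁻¹ ^ n / x) atTop)).congr' ?_ ?_
  all_goals
    filter_upwards [eventually_gt_atTop 1] with x hx
    have hlog := (log_pos hx).ne'
  · simp only [inv_pow, pow_succ]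
    field_simp
  · simp only [inv_pow, id]
    field_simp

theorem one_div_li_floor_isBigO (n : ℕ) :
    (fun x : ℝ ↦ 1 / li ⌊x⌋₊) =O[atTop] fun x ↦ (log x)⁻¹ ^ n := by
  have hlog : (fun x : ℝ ↦ log ⌊x⌋₊) ~[atTop] log := isEquivalent_nat_floor.log tendsto_id
  exact ((one_div_li_isBigO n).comp_tendsto
    (tendsto_natCast_atTop_atTop.comp tendsto_nat_floor_atTop)).trans (hlog.inv.isBigO.pow n)

theorem exists_sum_sub_integral_one_div_li_isBigO :
    ∃ C, ∀ n : ℕ, (fun x : ℝ ↦ ∑ i ∈ Finset.Icc 3 ⌊x⌋₊, 1 / li i -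
      (∫ t in (3 : ℝ)..x, 1 / li t) - C) =O[atTop] fun x ↦ (log x)⁻¹ ^ n := by
  obtain ⟨C, hC⟩ := exists_abs_sum_sub_integral_sub_le (f := fun x ↦ 1 / li x) (N := 3)
    (antitoneOn_one_div_li.mono (Ici_subset_Ioi.2 (by norm_num)))
    fun x hx ↦ one_div_nonneg.2 (li_pos (by push_cast at hx; linarith)).le
  refine ⟨C, fun n ↦ (IsBigO.of_bound' ?_).trans (one_div_li_floor_isBigO n)⟩
  filter_upwards [eventually_ge_atTop 3] with x hx
  exact (hC x (by exact_mod_cast hx)).trans (le_abs_self _)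

end LogarithmicIntegral

section Expansion

variable {k : ℕ → ℝ}

theorem inv_factorialSeries (hk : ∀ j : ℕ, 1 ≤ j →
      ∑ i ∈ Finset.range j, (Nat.factorial i : ℝ) * k (j - i) = j * Nat.factorial j) :
    factorialSeries⁻¹ = 1 - X - X ^ 2 * PowerSeries.mk fun j ↦ k (j + 1) := by
  have hmul : factorialSeries * (PowerSeries.mk fun j ↦ k (j + 1)) =
      PowerSeries.mk fun n ↦ (n + 1 : ℝ) * (n + 1).factorial := by
    ext n
    rw [coeff_mul, Finset.Nat.sum_antidiagonal_eq_sum_range_succ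
      fun i j ↦ coeff i factorialSeries * coeff j (PowerSeries.mk fun j ↦ k (j + 1))]
    simp only [factorialSeries, coeff_mk]
    rw [← Nat.cast_add_one n, ← hk (n + 1) (by lia)]
    refine Finset.sum_congr rfl fun i hi ↦ ?_
    rw [← Nat.sub_add_comm (Finset.mem_range_succ_iff.1 hi)]
  rw [PowerSeries.inv_eq_iff_mul_eq_one (by simp [factorialSeries])]
  have hexpand : (1 - X - X ^ 2 * PowerSeries.mk fun j ↦ k (j + 1)) * factorialSeries =
      factorialSeries - X * factorialSeries -
        X ^ 2 * PowerSeries.mk fun n ↦ (n + 1 : ℝ) * (n + 1).factorial := by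
    rw [← hmul]
    ring
  rw [hexpand]
  ext (_ | _ | n)
  · simp [factorialSeries]
  · simp [factorialSeries, coeff_X_pow_mul', coeff_succ_X_mul, coeff_one]
  · rw [map_sub, map_sub, coeff_succ_X_mul, coeff_X_pow_mul _ 2 n, coeff_one, if_neg (by lia)]
    simp only [factorialSeries, coeff_mk, Nat.factorial_succ]
    push_cast
    ring

theorem coeff_add_two_inv_factorialSeries (hk : ∀ j : ℕ, 1 ≤ j →
      ∑ i ∈ Finset.range j, (Nat.factorial i : ℝ) * k (j - i) = j * Nat.factorial j) (n : ℕ) :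
    coeff (n + 2) factorialSeries⁻¹ = -k (n + 1) := by
  simp [inv_factorialSeries hk, coeff_X_pow_mul', coeff_one, coeff_X]

/-- The asymptotic expansion of `∑ 1 / li n` in terms of `y = log x`, without its constant term,
up to and including the term in `1 / y ^ (m - 1)`. -/
noncomputable def sumExpansion (k : ℕ → ℝ) (m : ℕ) (y : ℝ) : ℝ :=
  1 / 2 * y ^ 2 - y - log y + ∑ j ∈ Finset.Icc 2 m, k j / ((j - 1) * y ^ (j - 1))

theorem hasDerivAt_const_div_mul_pow (c : ℝ) {y : ℝ} (hy : y ≠ 0) {m : ℕ} (hm : m ≠ 0) :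
    HasDerivAt (fun t ↦ c / (m * t ^ m)) (-c / y ^ (m + 1)) y := by
  have hm' : (m : ℝ) ≠ 0 := Nat.cast_ne_zero.2 hm
  refine ((((hasDerivAt_pow m y).const_mul (m : ℝ)).inv (by positivity)).const_mul c).congr_deriv ?_
  obtain ⟨n, rfl⟩ := Nat.exists_eq_succ_of_ne_zero hm
  simp only [Nat.succ_eq_add_one, Nat.add_sub_cancel]
  field_simp
  ring

theorem hasDerivAt_sumExpansion (hk : ∀ j : ℕ, 1 ≤ j →
      ∑ i ∈ Finset.range j, (Nat.factorial i : ℝ) * k (j - i) = j * Nat.factorial j)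
    {m : ℕ} (hm : 1 ≤ m) {y : ℝ} (hy : y ≠ 0) :
    HasDerivAt (sumExpansion k m) (y * (trunc (m + 2) factorialSeries⁻¹).eval y⁻¹) y := by
  rw [eval_trunc]
  induction m, hm using Nat.le_induction with
  | base =>
    have hcoeff0 : coeff 0 factorialSeries⁻¹ = 1 := by simp [inv_factorialSeries hk]
    have hcoeff1 : coeff 1 factorialSeries⁻¹ = -1 := by
      simp [inv_factorialSeries hk, coeff_X_pow_mul', coeff_one]
    have hcoeff2 : coeff 2 factorialSeries⁻¹ = -1 := by
      simpa [coeff_add_two_inv_factorialSeries hk 0] using hk 1 le_rfl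
    have hderiv := (((hasDerivAt_pow 2 y).const_mul (1 / 2)).sub (hasDerivAt_id y)).sub
      (hasDerivAt_log hy)
    refine (hderiv.congr_deriv ?_).congr_of_eventuallyEq (.of_forall fun t ↦ by simp [sumExpansion])
    simp only [Finset.sum_range_succ, Finset.sum_range_zero, Nat.reduceAdd, hcoeff0, hcoeff1,
      hcoeff2]
    field_simp
    ring
  | succ m hm ih =>
    have hsucc : sumExpansion k (m + 1) =
        fun t ↦ sumExpansion k m t + k (m + 1) / (m * t ^ m) := by
      ext t
      simp [sumExpansion, Finset.sum_Icc_succ_top (by lia : 2 ≤ m + 1), add_assoc]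
    rw [hsucc, Finset.sum_range_succ, mul_add]
    refine (ih.add (hasDerivAt_const_div_mul_pow (k (m + 1)) hy (by lia))).congr_deriv ?_
    congr 1
    rw [coeff_add_two_inv_factorialSeries hk, inv_pow]
    field_simp
    ring

theorem tendsto_sumExpansion_sub (k : ℕ → ℝ) (m : ℕ) :
    Tendsto (fun y ↦ sumExpansion k m y - sumExpansion k 1 y) atTop (𝓝 0) := by
  have hterm : ∀ j ∈ Finset.Icc 2 m,
      Tendsto (fun y : ℝ ↦ k j / ((j - 1) * y ^ (j - 1))) atTop (𝓝 0) := fun j hj ↦ by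
    have hj2 : 2 ≤ j := (Finset.mem_Icc.1 hj).1
    have hj1 : (0 : ℝ) < j - 1 := sub_pos.2 (by exact_mod_cast hj2)
    exact ((tendsto_pow_atTop (by lia)).const_mul_atTop hj1).const_div_atTop _
  simpa [sumExpansion] using tendsto_finsetSum _ hterm

theorem exists_integral_one_div_li_sub_isBigO (hk : ∀ j : ℕ, 1 ≤ j →
      ∑ i ∈ Finset.range j, (Nat.factorial i : ℝ) * k (j - i) = j * Nat.factorial j)
    {m : ℕ} (hm : 1 ≤ m) :
    ∃ C, (fun x ↦ (∫ t in (3 : ℝ)..x, 1 / li t) - sumExpansion k m (log x) - C)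
      =O[atTop] fun x ↦ (log x)⁻¹ ^ m := by
  have hlog : ∀ᶠ x in atTop, 0 < log x := tendsto_log_atTop.eventually_gt_atTop 0
  refine exists_sub_isBigO_of_deriv_isBigO
    (D' := fun x ↦ 1 / li x - log x / x * (trunc (m + 2) factorialSeries⁻¹).eval (log x)⁻¹)
    ?_ ((eventually_gt_atTop 1).mono fun x hx ↦ hasDerivAt_inv_log_pow hx m) ?_
    (hlog.mono fun x hx ↦ by positivity) ?_
  · filter_upwards [eventually_gt_atTop 2] with x hx
    have hlogx : log x ≠ 0 := (log_pos (one_lt_two.trans hx)).ne'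
    refine (hasDerivAt_integral_one_div_li hx).sub
      (((hasDerivAt_sumExpansion hk hm hlogx).comp x
        (hasDerivAt_log (by positivity))).congr_deriv ?_)
    ring
  · filter_upwards [hlog, eventually_gt_atTop 0] with x hx hx0
    exact neg_nonpos.2 (by positivity)
  · refine IsBigO.neg_right (IsBigO.const_mul_right (by positivity) ?_)
    refine (one_div_li_sub_isBigO (m + 2)).congr' .rfl ?_
    filter_upwards [hlog] with x hx
    simp only [inv_pow]
    field_simp
    ring

theorem exists_sum_one_div_li_sub_isBigO (hk : ∀ j : ℕ, 1 ≤ j →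
      ∑ i ∈ Finset.range j, (Nat.factorial i : ℝ) * k (j - i) = j * Nat.factorial j)
    {m : ℕ} (hm : 1 ≤ m) :
    ∃ E, (fun x : ℝ ↦ ∑ n ∈ Finset.Icc 3 ⌊x⌋₊, 1 / li n - sumExpansion k m (log x) - E)
      =O[atTop] fun x ↦ (log x)⁻¹ ^ m := by
  obtain ⟨C₁, hC₁⟩ := exists_sum_sub_integral_one_div_li_isBigO
  obtain ⟨C₂, hC₂⟩ := exists_integral_one_div_li_sub_isBigO hk hm
  exact ⟨C₁ + C₂, ((hC₁ m).add hC₂).congr_left fun x ↦ by ring⟩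

theorem tendsto_of_sum_one_div_li_sub_isBigO {m : ℕ} (hm : 1 ≤ m) {E : ℝ}
    (hE : (fun x : ℝ ↦ ∑ n ∈ Finset.Icc 3 ⌊x⌋₊, 1 / li n - sumExpansion k m (log x) - E)
      =O[atTop] fun x ↦ (log x)⁻¹ ^ m) :
    Tendsto (fun x : ℝ ↦ ∑ n ∈ Finset.Icc 3 ⌊x⌋₊, 1 / li n - sumExpansion k 1 (log x)) atTop
      (𝓝 E) := by
  have herror := hE.trans_tendsto
    (by simpa [Nat.ne_of_gt hm] using tendsto_inv_log_atTop.pow m)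
  have htail := (tendsto_sumExpansion_sub k m).comp tendsto_log_atTop
  have h := (herror.add htail).add_const E
  simp only [add_zero, zero_add] at h
  exact h.congr fun x ↦ by simp only [Function.comp_apply]; ring

end Expansion

theorem sum_one_div_li_asymptotic (k : ℕ → ℝ)
    (hk : ∀ j : ℕ, 1 ≤ j →
      ∑ i ∈ Finset.range j, (Nat.factorial i : ℝ) * k (j - i) =
        j * Nat.factorial j) :
    ∃ E : ℝ, ∀ m : ℕ, 2 ≤ m →
      (fun x : ℝ => (∑ n ∈ Finset.Icc 3 ⌊x⌋₊, 1 / li n) -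
          ((1 / 2) * (Real.log x) ^ 2 - Real.log x - Real.log (Real.log x) + E +
            ∑ j ∈ Finset.Icc 2 m, k j / (((j : ℝ) - 1) * (Real.log x) ^ (j - 1))))
        =O[atTop] (fun x : ℝ => 1 / (Real.log x) ^ m) := by
  obtain ⟨E, hE⟩ := exists_sum_one_div_li_sub_isBigO hk le_rfl
  refine ⟨E, fun m hm ↦ ?_⟩
  have hm1 : 1 ≤ m := one_le_two.trans hm
  obtain ⟨E', hE'⟩ := exists_sum_one_div_li_sub_isBigO hk hm1
  obtain rfl : E = E' := tendsto_nhds_unique (tendsto_of_sum_one_div_li_sub_isBigO le_rfl hE)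
    (tendsto_of_sum_one_div_li_sub_isBigO hm1 hE')
  refine hE'.congr (fun x ↦ ?_) fun x ↦ by rw [inv_pow, one_div]
  rw [sumExpansion]
  ring
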